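/- Let c ≥ 2 and α, β, γ ∈ ℂ. Define the core tensors F_a(x,y) for a ∈ {1,2,3} by F_1 = I, F_2 = J', F_3 = J (evaluated at entry (x,y)); the 3×3 array of 2×2 matrices G by G_{1,1} = I, G_{1,2} = J', G_{1,3} = J, G_{2,2} = J, G_{3,3} = J', and all other G_{a,b} = 0; and H_a by H_1 = αI + βJ + γJ', H_2 = γJ, H_3 = βJ'. Then for all indices i, j ∈ {0,…,2^c−1} with binary digits x_1,…,x_c and y_1,…,y_c respectively (most significant first), the tridiagonal Toeplitz matrix satisfies (D^{(c)}_{α,β,γ})_{i,j} = Σ_{a_1,…,a_{c−1} ∈ {1,2,3}} F_{a_1}(x_1,y_1) · (∏_{k=2}^{c−1} G_{a_{k−1},a_k}(x_k,y_k)) · H_{a_{c−1}}(x_c,y_c), where for c = 2 the middle product is empty. In particular D^{(c)}_{α,β,γ} admits a quantized tensor train (QTT) representation with bond dimension 3. -/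

import Mathlib

/- STATEMENT 0: QTT representation of the tridiagonal Toeplitz matrix
   `D^{(c)}_{α,β,γ}` (Lemma 1 / Kazeev–Khoromskij), with bond dimension 3.
   Binary digits are most-significant-first: the k-th digit (1 ≤ k ≤ c) of an
   index `i ∈ {0,…,2^c−1}` is `Nat.testBit i (c - k)`. -/

noncomputable section

/-- The 2×2 identity matrix `I`, with rows/columns indexed by bits. -/
def mI : Bool → Bool → ℂ := fun x y => if x = y then 1 else 0

/-- The 2×2 matrix `J = [[0,1],[0,0]]`, with rows/columns indexed by bits. -/
def mJ : Bool → Bool → ℂ := fun x y => if x = false ∧ y = true then 1 else 0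

/-- The 2×2 matrix `J' = [[0,0],[1,0]]`, with rows/columns indexed by bits. -/
def mJ' : Bool → Bool → ℂ := fun x y => if x = true ∧ y = false then 1 else 0

/-- First core: `F_1 = I`, `F_2 = J'`, `F_3 = J`. -/
def Fcore : Fin 3 → Bool → Bool → ℂ := ![mI, mJ', mJ]

/-- Middle core: `G_{1,1} = I`, `G_{1,2} = J'`, `G_{1,3} = J`, `G_{2,2} = J`,
    `G_{3,3} = J'`, all other entries `0`. -/
def Gcore : Fin 3 → Fin 3 → Bool → Bool → ℂ :=
  ![![mI, mJ', mJ], ![0, mJ, 0], ![0, 0, mJ']]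

/-- Last core: `H_1 = αI + βJ + γJ'`, `H_2 = γJ`, `H_3 = βJ'`. -/
def Hcore (α β γ : ℂ) : Fin 3 → Bool → Bool → ℂ :=
  ![fun x y => α * mI x y + β * mJ x y + γ * mJ' x y,
    fun x y => γ * mJ x y,
    fun x y => β * mJ' x y]

/-- The `2^c × 2^c` tridiagonal Toeplitz matrix with diagonal `α`,
    superdiagonal `β` and subdiagonal `γ`. -/
def triD (c : ℕ) (α β γ : ℂ) : Matrix (Fin (2 ^ c)) (Fin (2 ^ c)) ℂ :=
  Matrix.of fun i j =>
    if (i : ℕ) = (j : ℕ) then α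
    else if (j : ℕ) = (i : ℕ) + 1 then β
    else if (i : ℕ) = (j : ℕ) + 1 then γ
    else 0

/-- `dig c i k` is the k-th binary digit (1 ≤ k ≤ c, most significant first)
    of `i ∈ {0,…,2^c−1}`. -/
def dig (c i k : ℕ) : Bool := Nat.testBit i (c - k)


theorem transfer_sum (v : ℕ → Fin 3 → ℂ) (M : ℕ → Fin 3 → Fin 3 → ℂ) (n : ℕ) :
    (∀ k < n, ∀ b, v (k + 1) b = ∑ a, v k a * M k a b) → ∀ W : Fin 3 → ℂ,
    ∑ a : Fin (n + 1) → Fin 3, v 0 (a 0) *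
      (∏ t : Fin n, M t (a t.castSucc) (a t.succ)) * W (a (Fin.last n))
      = ∑ b, v n b * W b := by
  induction n with
  | zero =>
    intro _ W
    rw [← (Equiv.funUnique (Fin 1) (Fin 3)).symm.sum_comp]
    simp
  | succ n ih =>
    intro h W
    have ih' := ih (fun k hk => h k (by omega))
    rw [← (Fin.snocEquiv (fun _ : Fin (n + 2) => Fin 3)).sum_comp, Fintype.sum_prod_type]
    refine Finset.sum_congr rfl fun b _ => ?_
    rw [h n (by omega) b, Finset.sum_mul]
    have := ih' (fun a => M n a b * W b)
    simp only [← mul_assoc] at this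
    rw [← this]
    refine Finset.sum_congr rfl fun a _ => ?_
    rw [Fin.prod_univ_castSucc]
    have h0 : (Fin.snoc a b : Fin (n + 2) → Fin 3) 0 = a 0 :=
      Fin.snoc_castSucc (α := fun _ => Fin 3) b a 0
    have h1 : ∀ t : Fin n, (Fin.snoc a b : Fin (n + 2) → Fin 3) t.castSucc.succ = a t.succ :=
      fun t => Fin.snoc_castSucc (α := fun _ => Fin 3) b a t.succ
    simp [Fin.snocEquiv, h0, h1, Fin.snoc_castSucc, Fin.snoc_last, mul_assoc]

/-- Carry state of two prefixes. -/
def carryV (p q : ℕ) : Fin 3 → ℂ :=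
  ![if p = q then 1 else 0, if p = q + 1 then 1 else 0, if q = p + 1 then 1 else 0]

theorem bit_split (i m : ℕ) : i / 2 ^ m = 2 * (i / 2 ^ (m + 1)) + (Nat.testBit i m).toNat := by
  rw [Nat.toNat_testBit, pow_succ, ← Nat.div_div_eq_div_mul]
  omega

theorem carry_step (p q : ℕ) (x y : Bool) (b : Fin 3) :
    carryV (2 * p + x.toNat) (2 * q + y.toNat) b = ∑ a, carryV p q a * Gcore a b x y := by
  have e1 : (2 * p + 1 = 2 * q) = False := by simp; omega
  have e2 : (2 * p = 2 * q + 1) = False := by simp; omega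
  have e3 : (2 * p + 1 = 2 * q + 1 + 1) = False := by simp; omega
  have e4 : (2 * q + 1 = 2 * p + 1 + 1) = False := by simp; omega
  have e5 : (2 * p = 2 * q + 1 + 1) = (p = q + 1) := by simp; omega
  have e6 : (2 * q = 2 * p + 1 + 1) = (q = p + 1) := by simp; omega
  have e7 : (2 * q = 2 * p + 1) = False := by simp; omega
  have e8 : (q = p) = (p = q) := by simp [eq_comm]
  fin_cases b <;> cases x <;> cases y <;>
    simp [carryV, Gcore, Fin.sum_univ_three, mI, mJ, mJ', e1, e2, e3, e4, e5, e6, e7, e8]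

theorem carry_last (α β γ : ℂ) (p q : ℕ) (x y : Bool) :
    (if 2 * p + x.toNat = 2 * q + y.toNat then α
      else if 2 * q + y.toNat = 2 * p + x.toNat + 1 then β
      else if 2 * p + x.toNat = 2 * q + y.toNat + 1 then γ else 0)
      = ∑ a, carryV p q a * Hcore α β γ a x y := by
  rcases eq_or_ne p q with h | h
  · subst h
    cases x <;> cases y <;>
      simp [carryV, Hcore, Fin.sum_univ_three, mI, mJ, mJ'] <;> (intro h; omega)
  · cases x <;> cases y <;>
      simp [carryV, Hcore, Fin.sum_univ_three, mI, mJ, mJ', h] <;> grind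

theorem tridiagonal_qtt_rank_three (c : ℕ) (hc : 2 ≤ c) (α β γ : ℂ)
    (i j : Fin (2 ^ c)) :
    triD c α β γ i j =
      ∑ a : Fin (c - 1) → Fin 3,
        Fcore (a ⟨0, by omega⟩) (dig c i 1) (dig c j 1) *
        (∏ t : Fin (c - 2),
          Gcore (a ⟨t.val, by have := t.isLt; omega⟩)
                (a ⟨t.val + 1, by have := t.isLt; omega⟩)
                (dig c i (t.val + 2)) (dig c j (t.val + 2))) *
        Hcore α β γ (a ⟨c - 2, by omega⟩) (dig c i c) (dig c j c) := by
  obtain ⟨n, rfl⟩ : ∃ n, c = n + 2 := ⟨c - 2, by omega⟩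
  have key := transfer_sum
    (fun k => carryV (i / 2 ^ (n + 1 - k)) (j / 2 ^ (n + 1 - k)))
    (fun t a b => Gcore a b (dig (n + 2) i (t + 2)) (dig (n + 2) j (t + 2))) n
    (by
      intro k hk b
      have e : n + 1 - k = (n - k) + 1 := by omega
      have e' : n + 1 - (k + 1) = n - k := by omega
      have e2 : n + 2 - (k + 2) = n - k := by omega
      simp only [dig, e, e', e2]
      rw [← carry_step, ← bit_split, ← bit_split])
    (fun a => Hcore α β γ a (dig (n + 2) i (n + 2)) (dig (n + 2) j (n + 2)))
  have h0 : ∀ a, carryV ((i : ℕ) / 2 ^ (n + 1)) (j / 2 ^ (n + 1)) a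
      = Fcore a (dig (n + 2) i 1) (dig (n + 2) j 1) := by
    intro a
    have hz : ∀ i : Fin (2 ^ (n + 2)), (i : ℕ) / 2 ^ (n + 1)
        = (dig (n + 2) i 1).toNat := by
      intro i
      rw [bit_split, Nat.div_eq_of_lt i.isLt]
      simp [dig]
    rw [hz, hz]
    generalize dig (n + 2) i 1 = x
    generalize dig (n + 2) j 1 = y
    fin_cases a <;> cases x <;> cases y <;> simp [carryV, Fcore, mI, mJ, mJ']
  have hl : triD (n + 2) α β γ i j = ∑ b, carryV ((i : ℕ) / 2 ^ 1) (j / 2 ^ 1) b *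
      Hcore α β γ b (dig (n + 2) i (n + 2)) (dig (n + 2) j (n + 2)) := by
    rw [← carry_last]
    have hb : ∀ i : ℕ, 2 * (i / 2 ^ 1) + (dig (n + 2) i (n + 2)).toNat = i := by
      intro i
      have := bit_split i 0
      simp only [dig, Nat.sub_self]
      simpa using this.symm
    rw [hb, hb]
    rfl
  have en : n + 1 - n = 1 := by omega
  simp only [en, Nat.sub_zero, h0] at key
  rw [hl, ← key]
  rfl
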